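/- arXiv:1607.00714 — 2 statements merged into one kernel-verified Lean document; each statement's English description precedes it below -/
import Mathlib

section
/- For every cache configuration c ∈ C_n(m), the layered product-form distribution π_L satisfies the global balance equation of the layered-architecture cache-replacement chain: π_L(c)·(1 − Σ_{j∈c_h} p_j) = Σ_{k in list 0} Σ_{u∈c_1} π_L(c_{k→(1,u)})·p_u/m_1 + Σ_{i=1}^{h−1} Σ_{u∈c_i} Σ_{v∈c_{i+1}} π_L(c_{(i,u)↔(i+1,v)})·p_v/m_{i+1}. -/
/-!
The chain satisfies detailed balance along every edge. Exchanging `u ∈ c i` with `v ∈ c (i + 1)`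
multiplies the weight by `(p v / p u) ^ i * (p u / p v) ^ (i + 1) = p u / p v`, so each
summand on the right-hand side equals `π(c) * p u / m (i + 1)` (`configWeight_swapPages`). Summing
over the `m (i + 1)` pages `v` leaves `π(c) * p u` (`sum_swapPages`), where `u` ranges over all
pages of the lists `0, …, h - 1`. These lists partition the complement of `c h`, which has total
popularity `1 - ∑ j ∈ c h, p j`. The exchange between list `0` and list `1` is the case `i = 0`
of the same computation.
-/

open Finset

/-- A cache configuration: lists are indexed by `Fin (h+1)`, index `0` being "list 0"
(the storage layer / pages in no cache list), indices `1,…,h` the cache lists.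
Lists are pairwise disjoint, list `i ≠ 0` has `m i` pages, and all pages are covered. -/
def IsCacheConfig (n h : ℕ) (m : Fin (h+1) → ℕ) (c : Fin (h+1) → Finset (Fin n)) : Prop :=
  (∀ i, i ≠ 0 → (c i).card = m i) ∧
  (∀ i j, i ≠ j → Disjoint (c i) (c j)) ∧
  Finset.univ.biUnion c = Finset.univ

open scoped Classical in
/-- The finite set `C_n(m)` of all cache configurations. -/
noncomputable def cacheConfigs (n h : ℕ) (m : Fin (h+1) → ℕ) :
    Finset (Fin (h+1) → Finset (Fin n)) :=
  Finset.univ.filter (IsCacheConfig n h m)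

/-- Exchange a page of list `i` with a page of list `j`:
`swapPages c i j u v` moves `v` into list `i` (replacing `u`, which moves to list `j`,
replacing `v`).  For `i = 0` this is the replacement operation `c_{u→(j,v)}`
moving page `u` of list 0 into list `j` in place of `v`. -/
def swapPages (n h : ℕ) (c : Fin (h+1) → Finset (Fin n)) (i j : Fin (h+1)) (u v : Fin n) :
    Fin (h+1) → Finset (Fin n) :=
  fun l => if l = i then insert v ((c i).erase u)
           else if l = j then insert u ((c j).erase v) else c l

/-- Unnormalized product-form weight `∏_i (∏_{j∈c_i} p_j)^{ht(i)}` (note `ht 0 = 0`). -/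
noncomputable def configWeight (n h : ℕ) (p : Fin n → ℝ) (ht : Fin (h+1) → ℕ)
    (c : Fin (h+1) → Finset (Fin n)) : ℝ :=
  ∏ i, (∏ j ∈ c i, p j) ^ ht i

/-- The product-form distribution `π(c) = weight(c)/Z`. -/
noncomputable def piDist (n h : ℕ) (m : Fin (h+1) → ℕ) (p : Fin n → ℝ) (ht : Fin (h+1) → ℕ)
    (c : Fin (h+1) → Finset (Fin n)) : ℝ :=
  configWeight n h p ht c / ∑ c' ∈ cacheConfigs n h m, configWeight n h p ht c'

/-- Flat height function: `ht_F(i) = i` for `i ≤ h_N`, `ht_F(i) = i − h_N` for `i > h_N`. -/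
def htFlat (h hN : ℕ) : Fin (h+1) → ℕ :=
  fun i => if i.val ≤ hN then i.val else i.val - hN

/-- Layered height function: `ht_L(i) = i`. -/
def htLayer (h : ℕ) : Fin (h+1) → ℕ := fun i => i.val

lemma prod_insert_erase_mul {n : ℕ} (p : Fin n → ℝ) {s : Finset (Fin n)} {u v : Fin n}
    (hu : u ∈ s) (hv : v ∉ s) :
    (∏ x ∈ insert v (s.erase u), p x) * p u = p v * ∏ x ∈ s, p x := by
  rw [Finset.prod_insert (fun hmem => hv (Finset.mem_of_mem_erase hmem)), mul_assoc,
    Finset.prod_erase_mul _ _ hu]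

/-- Detailed balance for the unnormalized weights across two consecutive lists. -/
lemma configWeight_swapPages {n h : ℕ} (p : Fin n → ℝ) (hp : ∀ k, 0 < p k)
    (c : Fin (h+1) → Finset (Fin n)) (hdisj : ∀ i j, i ≠ j → Disjoint (c i) (c j))
    {i j : Fin (h+1)} (hij : j.val = i.val + 1) {u v : Fin n} (hu : u ∈ c i) (hv : v ∈ c j) :
    configWeight n h p (htLayer h) (swapPages n h c i j u v) * p v =
      configWeight n h p (htLayer h) c * p u := by
  have hne : i ≠ j := by
    rintro rfl
    omega
  have hvi : v ∉ c i := fun hmem => Finset.disjoint_left.mp (hdisj i j hne) hmem hv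
  have huj : u ∉ c j := Finset.disjoint_left.mp (hdisj i j hne) hu
  have hA := prod_insert_erase_mul p hu hvi
  have hB := prod_insert_erase_mul p hv huj
  have hjmem : j ∈ (Finset.univ : Finset (Fin (h+1))).erase i := by simp [hne.symm]
  unfold configWeight
  rw [← Finset.mul_prod_erase _ _ (Finset.mem_univ i), ← Finset.mul_prod_erase _ _ hjmem,
    ← Finset.mul_prod_erase _ (fun l => (∏ x ∈ c l, p x) ^ htLayer h l) (Finset.mem_univ i),
    ← Finset.mul_prod_erase _ (fun l => (∏ x ∈ c l, p x) ^ htLayer h l) hjmem]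
  have hrest : ∏ l ∈ ((Finset.univ : Finset (Fin (h+1))).erase i).erase j,
        (∏ x ∈ swapPages n h c i j u v l, p x) ^ htLayer h l =
      ∏ l ∈ ((Finset.univ : Finset (Fin (h+1))).erase i).erase j,
        (∏ x ∈ c l, p x) ^ htLayer h l := by
    refine Finset.prod_congr rfl fun l hl => ?_
    simp only [Finset.mem_erase, Finset.mem_univ, and_true] at hl
    simp [swapPages, hl.1, hl.2]
  rw [hrest]
  have hi : swapPages n h c i j u v i = insert v ((c i).erase u) := by simp [swapPages]
  have hj : swapPages n h c i j u v j = insert u ((c j).erase v) := by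
    simp [swapPages, hne.symm]
  rw [hi, hj]
  simp only [htLayer, hij]
  generalize ∏ l ∈ ((Finset.univ : Finset (Fin (h+1))).erase i).erase j,
        (∏ x ∈ c l, p x) ^ l.val = R
  have hpu := (hp u).ne'
  have hpv := (hp v).ne'
  rw [eq_div_of_mul_eq hpu hA, eq_div_of_mul_eq hpv hB]
  simp only [div_pow, mul_pow, pow_succ]
  field_simp

/-- The total inflow into `c` through exchanges between the consecutive lists `i` and `j`. -/
lemma sum_swapPages {n h : ℕ} (p : Fin n → ℝ) (hp : ∀ k, 0 < p k)
    (m : Fin (h+1) → ℕ) (hm : ∀ i, i ≠ 0 → 0 < m i)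
    (c : Fin (h+1) → Finset (Fin n)) (hc : IsCacheConfig n h m c)
    {i j : Fin (h+1)} (hij : j.val = i.val + 1) :
    ∑ u ∈ c i, ∑ v ∈ c j,
        piDist n h m p (htLayer h) (swapPages n h c i j u v) * p v / (m j : ℝ) =
      piDist n h m p (htLayer h) c * ∑ u ∈ c i, p u := by
  have hj0 : j ≠ 0 := by
    rintro rfl
    simp at hij
  have hmj : (m j : ℝ) ≠ 0 := by exact_mod_cast (hm j hj0).ne'
  rw [Finset.mul_sum]
  refine Finset.sum_congr rfl fun u hu => ?_
  have hterm : ∀ v ∈ c j,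
      piDist n h m p (htLayer h) (swapPages n h c i j u v) * p v / (m j : ℝ) =
        piDist n h m p (htLayer h) c * p u / (m j : ℝ) := by
    intro v hv
    unfold piDist
    rw [div_mul_eq_mul_div, configWeight_swapPages p hp c hc.2.1 hij hu hv, div_mul_eq_mul_div]
  rw [Finset.sum_congr rfl hterm, Finset.sum_const, hc.1 j hj0, nsmul_eq_mul]
  field_simp

/-- the layered product-form distribution satisfies the global balance equation
of the layered-architecture cache-replacement chain. -/
theorem layered_global_balance
    (n h : ℕ) (hn : 2 ≤ n) (hh : 2 ≤ h)
    (p : Fin n → ℝ) (hp : ∀ k, 0 < p k) (hpsum : ∑ k, p k = 1)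
    (m : Fin (h+1) → ℕ) (hm : ∀ i, i ≠ 0 → 0 < m i)
    (hmn : ∑ i ∈ Finset.univ.filter (fun i : Fin (h+1) => i ≠ 0), m i < n)
    (c : Fin (h+1) → Finset (Fin n)) (hc : c ∈ cacheConfigs n h m) :
    piDist n h m p (htLayer h) c * (1 - ∑ j ∈ c ⟨h, by omega⟩, p j) =
      (∑ k ∈ c 0, ∑ u ∈ c ⟨1, by omega⟩,
          piDist n h m p (htLayer h) (swapPages n h c 0 ⟨1, by omega⟩ k u) * p u
            / (m ⟨1, by omega⟩ : ℝ))
      + ∑ i ∈ Finset.univ.filter (fun i : Fin (h+1) => 1 ≤ i.val ∧ i.val < h),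
          ∑ u ∈ c i, ∑ v ∈ c (i + 1),
            piDist n h m p (htLayer h) (swapPages n h c i (i + 1) u v) * p v
              / (m (i + 1) : ℝ) := by
  have hcfg : IsCacheConfig n h m c := by
    simpa [cacheConfigs] using hc
  have h1 := sum_swapPages p hp m hm c hcfg (i := 0) (j := ⟨1, by omega⟩) (by simp)
  have h2 : ∀ i ∈ Finset.univ.filter (fun i : Fin (h+1) => 1 ≤ i.val ∧ i.val < h),
      ∑ u ∈ c i, ∑ v ∈ c (i + 1),
        piDist n h m p (htLayer h) (swapPages n h c i (i + 1) u v) * p v / (m (i + 1) : ℝ) =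
      piDist n h m p (htLayer h) c * ∑ u ∈ c i, p u := by
    intro i hi
    simp only [Finset.mem_filter, Finset.mem_univ, true_and] at hi
    -- `i + 1` does not wrap around in `Fin (h + 1)` because `i < h`.
    exact sum_swapPages p hp m hm c hcfg
      (Fin.val_add_one_of_lt (Fin.lt_def.mpr (by simpa using hi.2)))
  rw [h1, Finset.sum_congr rfl h2, ← Finset.mul_sum, ← mul_add]
  congr 1
  have htotal : ∑ i, ∑ u ∈ c i, p u = 1 := by
    rw [← hpsum, ← hcfg.2.2, Finset.sum_biUnion]
    exact fun i _ j _ hij => hcfg.2.1 i j hij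
  have hset : (Finset.univ : Finset (Fin (h+1))) =
      insert ⟨h, by omega⟩ (insert 0
        (Finset.univ.filter (fun i : Fin (h+1) => 1 ≤ i.val ∧ i.val < h))) := by
    ext i
    simp only [Finset.mem_univ, Finset.mem_insert, Finset.mem_filter, true_and, Fin.ext_iff,
      Fin.val_zero, true_iff]
    omega
  rw [hset, Finset.sum_insert, Finset.sum_insert] at htotal
  · linarith
  · simp
  · simp [Fin.ext_iff]
    omega
end

section
/- Let π: C_n(m) → (0,∞) satisfy the flat exchange conditions (*F). Then for all configurations c, c′ ∈ C_n(m): π(c′)/π(c) = ∏_{k=1}^n p_k^{I_k(c′) − I_k(c)}, where I_k(c) = ht_F(i) if page k lies in list i of c (1 ≤ i ≤ h) and I_k(c) = 0 if page k is in list 0 of c. -/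
/-!
A configuration is the same thing as a function `f : Fin n → Fin (h+1)` sending each page to the
list containing it, and exchanging the pages `u` and `v` is precomposition of `f` with
`Equiv.swap u v`. Let `V f = π(f) / ∏ k, p k ^ ht (f k)`. The claim is that `V` takes the same value
at all configurations.

Call two lists `a`, `b` *exchangeable* (`Exch`) if `V` is unchanged whenever a page of `a` is
exchanged with a page of `b`. Conditions (*F) say exactly that the neighbours in the path
`hN - ⋯ - 1 - 0 - (hN+1) - ⋯ - h` are exchangeable. As every list is nonempty, exchangeability is
transitive (`Exch.trans`): an exchange between `a` and `d` is a composition of three exchanges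
through a page of an intermediate list `b`. Hence `V` is invariant under every transposition, so
under every permutation of the pages, and any two configurations differ by a permutation because
their lists have the same sizes.
-/

open Finset

/-- `I_k(c)`: the height of the list of `c` containing page `k` (0 if `k` is in list 0).
Since the lists of a configuration are pairwise disjoint, the sum has at most one
nonzero term. -/
def heightOf (n h : ℕ) (ht : Fin (h+1) → ℕ) (c : Fin (h+1) → Finset (Fin n)) (k : Fin n) : ℕ :=
  ∑ i, if k ∈ c i then ht i else 0

section Exchange

variable {α β γ : Type*} [DecidableEq α]

/-- Lists `a` and `b` are exchangeable for `V` on the class `S` of assignments `α → β`: exchanging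
an element assigned to `a` with one assigned to `b` does not change `V`. -/
def Exch (S : (α → β) → Prop) (V : (α → β) → γ) (a b : β) : Prop :=
  ∀ f, S f → ∀ u v, f u = a → f v = b → V (f ∘ Equiv.swap u v) = V f

variable {S : (α → β) → Prop} {V : (α → β) → γ}

lemma comp_swap_eq_self {f : α → β} {u v : α} (huv : f u = f v) : f ∘ Equiv.swap u v = f := by
  funext k
  simp only [Function.comp, Equiv.swap_apply_def]
  split_ifs <;> simp_all

lemma Exch.refl (a : β) : Exch S V a a := by
  intro f _ u v hu hv
  rw [comp_swap_eq_self (hu.trans hv.symm)]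

lemma Exch.symm {a b : β} (hab : Exch S V a b) : Exch S V b a := by
  intro f hf u v hu hv
  rw [Equiv.swap_comm]
  exact hab f hf v u hv hu

lemma Exch.trans (hS : ∀ f, S f → ∀ σ : Equiv.Perm α, S (f ∘ σ))
    (hsurj : ∀ f, S f → Function.Surjective f) {a b d : β}
    (hab : Exch S V a b) (hbd : Exch S V b d) : Exch S V a d := by
  by_cases h1 : a = b
  · exact h1 ▸ hbd
  by_cases h2 : b = d
  · exact h2 ▸ hab
  intro f hf u v hu hv
  by_cases h3 : a = d
  · rw [comp_swap_eq_self (by rw [hu, hv, h3])]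
  obtain ⟨w, hw⟩ := hsurj f hf b
  have huw : u ≠ w := by rintro rfl; exact h1 (hu.symm.trans hw)
  have hvw : v ≠ w := by rintro rfl; exact h2 (hw.symm.trans hv)
  have huv : u ≠ v := by rintro rfl; exact h3 (hu.symm.trans hv)
  -- The contents of `(u, w, v)` evolve as `(a, b, d)`, `(b, a, d)`, `(d, a, b)`, `(d, b, a)`.
  have key : f ∘ Equiv.swap u v =
      ((f ∘ Equiv.swap u w) ∘ Equiv.swap u v) ∘ Equiv.swap v w := by
    funext k
    simp only [Function.comp, Equiv.swap_apply_def]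
    grind
  have hf1 := hS f hf (Equiv.swap u w)
  have hf2 := hS _ hf1 (Equiv.swap u v)
  rw [key, hab.symm _ hf2 v w, hbd _ hf1 u v, hab f hf u w hu hw]
  · simpa using hw
  · simpa [Equiv.swap_apply_of_ne_of_ne huv.symm hvw] using hv
  · simpa using hw
  · simpa [Equiv.swap_apply_of_ne_of_ne huw.symm hvw.symm] using hu

lemma comp_perm_of_exch [Finite α] (hS : ∀ f, S f → ∀ σ : Equiv.Perm α, S (f ∘ σ))
    (hex : ∀ a b, Exch S V a b) {f : α → β} (hf : S f) (σ : Equiv.Perm α) :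
    V (f ∘ σ) = V f := by
  induction σ using Equiv.Perm.swap_induction_on' with
  | one => rfl
  | mul_swap σ x y _ ih =>
    rw [← ih]
    exact hex _ _ (f ∘ σ) (hS f hf σ) x y rfl rfl

end Exchange

/-- Two maps from a finite type whose fibres have the same sizes differ by a permutation. -/
lemma exists_perm_of_card_fibre_eq {α β : Type*} [Fintype α] [DecidableEq β]
    {f g : α → β}
    (hfg : ∀ b, #{k | f k = b} = #{k | g k = b}) : ∃ σ : Equiv.Perm α, g = f ∘ σ := by
  have e : ∀ b, {k // g k = b} ≃ {k // f k = b} := fun b =>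
    Fintype.equivOfCardEq (by rw [Fintype.card_subtype, Fintype.card_subtype, hfg])
  exact ⟨Equiv.ofFiberEquiv e, funext fun k => (Equiv.ofFiberEquiv_map e k).symm⟩

section Assignments

variable {n h : ℕ}

/-- The tuple of lists attached to an assignment of pages to lists. -/
def listsOf (f : Fin n → Fin (h+1)) : Fin (h+1) → Finset (Fin n) :=
  fun i => {k | f k = i}

lemma mem_listsOf {f : Fin n → Fin (h+1)} {i : Fin (h+1)} {k : Fin n} :
    k ∈ listsOf f i ↔ f k = i := by
  simp [listsOf]

lemma listsOf_mem_cacheConfigs {m : Fin (h+1) → ℕ} {f : Fin n → Fin (h+1)} :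
    listsOf f ∈ cacheConfigs n h m ↔ ∀ i, i ≠ 0 → (listsOf f i).card = m i := by
  simp only [cacheConfigs, IsCacheConfig, Finset.mem_filter, Finset.mem_univ, true_and,
    and_iff_left_iff_imp]
  refine fun _ => ⟨fun i j hij => Finset.disjoint_left.2 fun k hi hj => hij ?_, ?_⟩
  · exact (mem_listsOf.1 hi).symm.trans (mem_listsOf.1 hj)
  · ext k
    simp [mem_listsOf]

lemma exists_eq_listsOf {m : Fin (h+1) → ℕ} {c : Fin (h+1) → Finset (Fin n)}
    (hc : c ∈ cacheConfigs n h m) : ∃ f, c = listsOf f := by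
  simp only [cacheConfigs, IsCacheConfig, Finset.mem_filter, Finset.mem_univ, true_and] at hc
  obtain ⟨-, hdisj, hcov⟩ := hc
  have hex : ∀ k : Fin n, ∃ i, k ∈ c i := fun k => by
    simpa using (Finset.ext_iff.1 hcov k)
  choose f hf using hex
  refine ⟨f, funext fun i => Finset.ext fun k => ?_⟩
  rw [mem_listsOf]
  constructor
  · intro hk
    by_contra hne
    exact Finset.disjoint_left.1 (hdisj _ _ hne) (hf k) hk
  · rintro rfl
    exact hf k

lemma heightOf_listsOf (ht : Fin (h+1) → ℕ) (f : Fin n → Fin (h+1)) (k : Fin n) :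
    heightOf n h ht (listsOf f) k = ht (f k) := by
  simp [heightOf, mem_listsOf]

lemma swapPages_listsOf {f : Fin n → Fin (h+1)} {u v : Fin n} {i j : Fin (h+1)}
    (hu : f u = i) (hv : f v = j) (hij : i ≠ j) :
    swapPages n h (listsOf f) i j u v = listsOf (f ∘ Equiv.swap u v) := by
  funext l
  ext k
  rw [mem_listsOf]
  simp only [swapPages, Function.comp, Equiv.swap_apply_def]
  split_ifs <;> simp only [Finset.mem_insert, Finset.mem_erase, mem_listsOf] <;> grind

lemma card_listsOf_comp_perm (f : Fin n → Fin (h+1)) (σ : Equiv.Perm (Fin n)) (i : Fin (h+1)) :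
    (listsOf (f ∘ σ) i).card = (listsOf f i).card := by
  refine Finset.card_bij (fun k _ => σ k) ?_ ?_ ?_
  · intro k hk
    simpa [mem_listsOf] using hk
  · intro a _ b _ hab
    exact σ.injective hab
  · intro b hb
    exact ⟨σ.symm b, by simpa [mem_listsOf] using hb, by simp⟩

lemma card_listsOf_zero_add {m : Fin (h+1) → ℕ} {f : Fin n → Fin (h+1)}
    (hf : listsOf f ∈ cacheConfigs n h m) :
    (listsOf f 0).card + ∑ i ∈ Finset.univ.filter (fun i : Fin (h+1) => i ≠ 0), m i = n := by
  have hsum : ∑ i, (listsOf f i).card = n := by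
    have := Finset.card_eq_sum_card_fiberwise (s := Finset.univ) (t := Finset.univ) (f := f)
      (by simp)
    simpa [listsOf] using this.symm
  rw [← Finset.sum_congr rfl fun i hi => listsOf_mem_cacheConfigs.1 hf i (Finset.mem_filter.1 hi).2,
    Finset.filter_ne', Finset.add_sum_erase _ (fun i => (listsOf f i).card) (Finset.mem_univ _)]
  exact hsum

/-- The product-form weight of an assignment. -/
noncomputable def pageWeight (p : Fin n → ℝ) (ht : Fin (h+1) → ℕ) (f : Fin n → Fin (h+1)) : ℝ :=
  ∏ k, p k ^ ht (f k)

lemma pageWeight_pos {p : Fin n → ℝ} (hp : ∀ k, 0 < p k) (ht : Fin (h+1) → ℕ)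
    (f : Fin n → Fin (h+1)) : 0 < pageWeight p ht f :=
  Finset.prod_pos fun k _ => pow_pos (hp k) _

/-- Exchanging pages of lists at consecutive heights changes the weight by the factor
`p u / p v`. -/
lemma pageWeight_swap (p : Fin n → ℝ) {ht : Fin (h+1) → ℕ} {f : Fin n → Fin (h+1)} {u v : Fin n}
    (hht : ht (f v) = ht (f u) + 1) :
    pageWeight p ht (f ∘ Equiv.swap u v) * p v = pageWeight p ht f * p u := by
  have huv : v ≠ u := by rintro rfl; omega
  have hv : v ∈ Finset.univ.erase u := by simp [huv]
  have hrest : ∏ k ∈ (Finset.univ.erase u).erase v, p k ^ ht ((f ∘ Equiv.swap u v) k) =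
      ∏ k ∈ (Finset.univ.erase u).erase v, p k ^ ht (f k) := by
    refine Finset.prod_congr rfl fun k hk => ?_
    simp only [Finset.mem_erase] at hk
    simp [Equiv.swap_apply_of_ne_of_ne hk.2.1 hk.1]
  unfold pageWeight
  rw [← Finset.mul_prod_erase _ _ (Finset.mem_univ u), ← Finset.mul_prod_erase _ _ hv, hrest,
    ← Finset.mul_prod_erase _ (fun k => p k ^ ht (f k)) (Finset.mem_univ u),
    ← Finset.mul_prod_erase _ (fun k => p k ^ ht (f k)) hv]
  simp only [Function.comp, Equiv.swap_apply_left, Equiv.swap_apply_right, hht]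
  ring

end Assignments

/-- if `π` satisfies the flat exchange conditions (*F), then for all
configurations `c, c'`, `π(c')/π(c) = ∏_k p_k^{I_k(c') − I_k(c)}`. -/
theorem flat_exchange_ratio
    (n h hN : ℕ) (hn : 2 ≤ n) (hh : 2 ≤ h) (hN1 : 1 ≤ hN) (hNh : hN < h)
    (p : Fin n → ℝ) (hp : ∀ k, 0 < p k) (hpsum : ∑ k, p k = 1)
    (m : Fin (h+1) → ℕ) (hm : ∀ i, i ≠ 0 → 0 < m i)
    (hmn : ∑ i ∈ Finset.univ.filter (fun i : Fin (h+1) => i ≠ 0), m i < n)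
    (π : (Fin (h+1) → Finset (Fin n)) → ℝ)
    (hπpos : ∀ c ∈ cacheConfigs n h m, 0 < π c)
    (hstar : ∀ c ∈ cacheConfigs n h m,
      (∀ i : Fin (h+1), 1 ≤ i.val → i.val < h → i.val ≠ hN →
        ∀ u ∈ c i, ∀ v ∈ c (i + 1),
          π (swapPages n h c i (i + 1) u v) * p v = π c * p u) ∧
      (∀ k ∈ c 0, ∀ u ∈ c ⟨1, by omega⟩,
        π (swapPages n h c 0 ⟨1, by omega⟩ k u) * p u = π c * p k) ∧
      (∀ k ∈ c 0, ∀ u ∈ c ⟨hN + 1, by omega⟩,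
        π (swapPages n h c 0 ⟨hN + 1, by omega⟩ k u) * p u = π c * p k)) :
    ∀ c ∈ cacheConfigs n h m, ∀ c' ∈ cacheConfigs n h m,
      π c' / π c =
        ∏ k, p k ^ ((heightOf n h (htFlat h hN) c' k : ℤ) -
          (heightOf n h (htFlat h hN) c k : ℤ)) := by
  set ht := htFlat h hN with hht
  let S : (Fin n → Fin (h+1)) → Prop := fun f => listsOf f ∈ cacheConfigs n h m
  let V : (Fin n → Fin (h+1)) → ℝ := fun f => π (listsOf f) / pageWeight p ht f
  have hS : ∀ f, S f → ∀ σ : Equiv.Perm (Fin n), S (f ∘ σ) := fun f hf σ =>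
    listsOf_mem_cacheConfigs.2 fun i hi => by
      rw [card_listsOf_comp_perm, listsOf_mem_cacheConfigs.1 hf i hi]
  have hsurj : ∀ f, S f → Function.Surjective f := by
    intro f hf i
    have hpos : 0 < (listsOf f i).card := by
      by_cases hi : i = 0
      · have := card_listsOf_zero_add hf
        subst hi
        omega
      · rw [listsOf_mem_cacheConfigs.1 hf i hi]
        exact hm i hi
    obtain ⟨k, hk⟩ := Finset.card_pos.1 hpos
    exact ⟨k, mem_listsOf.1 hk⟩
  -- An exchange condition of (*F) between lists at consecutive heights gives exchangeability.
  have hstep : ∀ a b : Fin (h+1), ht b = ht a + 1 →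
      (∀ f, S f → ∀ u ∈ listsOf f a, ∀ v ∈ listsOf f b,
        π (swapPages n h (listsOf f) a b u v) * p v = π (listsOf f) * p u) → Exch S V a b := by
    intro a b hab hex f hf u v hu hv
    have hne : a ≠ b := by rintro rfl; omega
    have h1 := hex f hf u (mem_listsOf.2 hu) v (mem_listsOf.2 hv)
    rw [swapPages_listsOf hu hv hne] at h1
    have h2 := pageWeight_swap p (ht := ht) (f := f) (u := u) (v := v) (by rw [hu, hv, hab])
    have hw := pageWeight_pos hp ht f
    have hw' := pageWeight_pos hp ht (f ∘ Equiv.swap u v)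
    have hpu := hp u
    have hpv := hp v
    simp only [V]
    rw [div_eq_div_iff hw'.ne' hw.ne']
    apply mul_right_cancel₀ (mul_pos hpu hpv).ne'
    linear_combination (pageWeight p ht f * p u) * h1 - (π (listsOf f) * p u) * h2
  have hzero : ∀ (i : ℕ) (hi : i < h + 1), Exch S V 0 ⟨i, hi⟩ := by
    intro i
    induction i with
    | zero => exact fun _ => Exch.refl _
    | succ i ih =>
      intro hi
      by_cases hi0 : i = 0
      · subst hi0
        refine hstep _ _ ?_ fun f hf => (hstar _ hf).2.1
        simp [hht, htFlat, hN1]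
      by_cases hiN : i = hN
      · subst hiN
        refine hstep _ _ ?_ fun f hf => (hstar _ hf).2.2
        simp [hht, htFlat]
      refine Exch.trans hS hsurj (ih (by omega)) ?_
      have hsucc : (⟨i + 1, hi⟩ : Fin (h+1)) = ⟨i, by omega⟩ + 1 := by
        ext
        rw [Fin.val_add_one_of_lt (by simp [Fin.lt_def]; omega)]
      refine hstep _ _ ?_ fun f hf => ?_
      · simp only [hht, htFlat]
        split_ifs <;> omega
      · rw [hsucc]
        exact (hstar _ hf).1 ⟨i, by omega⟩ (by simp; omega) (by simp; omega) (by simpa using hiN)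
  have hall : ∀ a b, Exch S V a b := fun a b =>
    Exch.trans hS hsurj (hzero a a.2).symm (hzero b b.2)
  intro c hc c' hc'
  obtain ⟨f, rfl⟩ := exists_eq_listsOf hc
  obtain ⟨g, rfl⟩ := exists_eq_listsOf hc'
  have hcard : ∀ i, (listsOf f i).card = (listsOf g i).card := by
    intro i
    by_cases hi : i = 0
    · have h1 := card_listsOf_zero_add hc
      have h2 := card_listsOf_zero_add hc'
      subst hi
      omega
    · rw [listsOf_mem_cacheConfigs.1 hc i hi, listsOf_mem_cacheConfigs.1 hc' i hi]
  obtain ⟨σ, hσ⟩ := exists_perm_of_card_fibre_eq hcard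
  have hV : V g = V f := hσ ▸ comp_perm_of_exch hS hall hc σ
  have hf := pageWeight_pos hp ht f
  have hg := pageWeight_pos hp ht g
  have hprod : ∏ k, p k ^ ((heightOf n h ht (listsOf g) k : ℤ) -
      (heightOf n h ht (listsOf f) k : ℤ)) = pageWeight p ht g / pageWeight p ht f := by
    rw [pageWeight, pageWeight, ← Finset.prod_div_distrib]
    refine Finset.prod_congr rfl fun k _ => ?_
    rw [heightOf_listsOf, heightOf_listsOf, zpow_sub₀ (hp k).ne', zpow_natCast, zpow_natCast]
  rw [hprod, div_eq_div_iff (hπpos _ hc).ne' hf.ne']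
  simp only [V] at hV
  rw [div_eq_div_iff hg.ne' hf.ne'] at hV
  linear_combination hV
end
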